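/- arXiv:1911.09133 — 2 statements merged into one kernel-verified Lean document; each statement's English description precedes it below -/
import Mathlib

section
/- Let TS=(S,Σ,→,s₀) be a finite, reachable, deterministic LTS and a,b∈Σ labels with a∥b and a⊲⊳b. Then no Petri net with weighted comparable presets (WPI) solves TS. -/
section Defs

variable {S L P T : Type*}

/-- `enab tr s a` means the label `a` is enabled at state `s`, i.e. `s[a⟩`. -/
def enab (tr : S → L → S → Prop) (s : S) (a : L) : Prop := ∃ s', tr s a s'

/-- The LTS is deterministic. -/
def Deterministic (tr : S → L → S → Prop) : Prop :=
  ∀ s a s' s'', tr s a s' → tr s a s'' → s' = s''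

/-- `Walk tr s σ s'` : a walk from `s` to `s'` labelled by the word `σ`. -/
inductive Walk (tr : S → L → S → Prop) : S → List L → S → Prop
  | nil (s : S) : Walk tr s [] s
  | cons {s s' s'' : S} {a : L} {σ : List L} :
      tr s a s' → Walk tr s' σ s'' → Walk tr s (a :: σ) s''

/-- `s` is reachable from `s₀`. -/
def ReachableState (tr : S → L → S → Prop) (s₀ s : S) : Prop := ∃ σ, Walk tr s₀ σ s

/-- Every state is reachable from the initial state `s₀`. -/
def ReachableLTS (tr : S → L → S → Prop) (s₀ : S) : Prop := ∀ s, ReachableState tr s₀ s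

/-- `a ≡ b` : `a` and `b` are enabled at exactly the same states. -/
def lequiv (tr : S → L → S → Prop) (a b : L) : Prop := ∀ s, enab tr s a ↔ enab tr s b

/-- `a ▷ b` : wherever `a` is enabled so is `b`, and somewhere `b` is enabled but not `a`. -/
def limpl (tr : S → L → S → Prop) (a b : L) : Prop :=
  (∀ s, enab tr s a → enab tr s b) ∧ ∃ s, enab tr s b ∧ ¬ enab tr s a

/-- `a ⋈ b` : `a ▷ b` or `b ▷ a`. -/
def lbowtie (tr : S → L → S → Prop) (a b : L) : Prop := limpl tr a b ∨ limpl tr b a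

/-- `a ∥ b` : somewhere `a` but not `b` is enabled, and somewhere `b` but not `a`. -/
def linter (tr : S → L → S → Prop) (a b : L) : Prop :=
  (∃ s, enab tr s a ∧ ¬ enab tr s b) ∧ (∃ s, enab tr s b ∧ ¬ enab tr s a)

/-- Deactivation relation `a ⊲⊳ b`: one of the labels can deactivate the other. -/
def ldeact (tr : S → L → S → Prop) (a b : L) : Prop :=
  ∃ s s', (enab tr s a ∧ tr s b s' ∧ ¬ enab tr s' a) ∨
          (enab tr s b ∧ tr s a s' ∧ ¬ enab tr s' b)

/-- A Petri net over places `P` and transitions `T`: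
`Wpt p t = W(p,t)`, `Wtp t p = W(t,p)`, `M0` the initial marking. -/
structure PetriNet (P T : Type*) where
  Wpt : P → T → ℕ
  Wtp : T → P → ℕ
  M0 : P → ℕ

/-- A marking `M` enables a transition `t`. -/
def PetriNet.enables (N : PetriNet P T) (M : P → ℕ) (t : T) : Prop :=
  ∀ p, N.Wpt p t ≤ M p

/-- The marking resulting from firing `t` at `M`. -/
def PetriNet.fire (N : PetriNet P T) (M : P → ℕ) (t : T) : P → ℕ :=
  fun p => M p - N.Wpt p t + N.Wtp t p

/-- One firing step between markings. -/
def PetriNet.step (N : PetriNet P T) (M M' : P → ℕ) : Prop :=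
  ∃ t, N.enables M t ∧ M' = N.fire M t

/-- The marking `M` is reachable from the initial marking. -/
def PetriNet.reach (N : PetriNet P T) (M : P → ℕ) : Prop :=
  Relation.ReflTransGen N.step N.M0 M

/-- `N` solves the LTS given by `tr` and initial state `s₀`: there is a bijection `ζ`
from the states onto the reachable markings with `ζ s₀ = M₀` preserving edges both ways. -/
def Solves (N : PetriNet P T) (tr : S → T → S → Prop) (s₀ : S) : Prop :=
  ∃ ζ : S → (P → ℕ),
    Function.Injective ζ ∧
    (∀ M, N.reach M ↔ ∃ s, ζ s = M) ∧
    ζ s₀ = N.M0 ∧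
    ∀ s s' t, tr s t s' ↔ (N.enables (ζ s) t ∧ N.fire (ζ s) t = ζ s')

/-- The preset `•t` of a transition. -/
def PetriNet.preset (N : PetriNet P T) (t : T) : Set P := {p | 0 < N.Wpt p t}

/-- The postset `p^•` of a place. -/
def PetriNet.postset (N : PetriNet P T) (p : P) : Set T := {t | 0 < N.Wpt p t}

/-- `•T'` for a set of transitions `T'`. -/
def PetriNet.presetSet (N : PetriNet P T) (T' : Set T) : Set P :=
  {p | ∃ t ∈ T', 0 < N.Wpt p t}

/-- All arc weights are at most 1. -/
def PetriNet.plain (N : PetriNet P T) : Prop :=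
  ∀ p t, N.Wpt p t ≤ 1 ∧ N.Wtp t p ≤ 1

/-- Weighted comparable presets: transitions with intersecting presets have comparable presets. -/
def PetriNet.WPI (N : PetriNet P T) : Prop :=
  ∀ t t', (N.preset t ∩ N.preset t').Nonempty →
    (∀ p, N.Wpt p t ≤ N.Wpt p t') ∨ (∀ p, N.Wpt p t' ≤ N.Wpt p t)

/-- Weighted asymmetric choice. -/
def PetriNet.WAC (N : PetriNet P T) : Prop :=
  ∀ p p', (N.postset p ∩ N.postset p').Nonempty →
    (∀ t, N.Wpt p t ≤ N.Wpt p' t) ∨ (∀ t, N.Wpt p' t ≤ N.Wpt p t)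

/-- Equal conflict. -/
def PetriNet.EC (N : PetriNet P T) : Prop :=
  ∀ t t', (N.preset t ∩ N.preset t').Nonempty → ∀ p, N.Wpt p t = N.Wpt p t'

/-- Asymmetric choice: weighted asymmetric choice and plain. -/
def PetriNet.AC (N : PetriNet P T) : Prop := N.plain ∧ N.WAC

/-- Block-reduced asymmetric choice. -/
def PetriNet.BRAC (N : PetriNet P T) : Prop :=
  N.plain ∧ ∀ p p', (N.postset p ∩ N.postset p').Nonempty →
    N.postset p = N.postset p' ∨
    ∃ T1 T2 : Set T,
      (N.postset p = T1 ∧ N.postset p' = T1 ∪ T2 ∧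
        N.presetSet T1 = {p, p'} ∧ N.presetSet T2 = {p'}) ∨
      (N.postset p' = T1 ∧ N.postset p = T1 ∪ T2 ∧
        N.presetSet T1 = {p, p'} ∧ N.presetSet T2 = {p})

/-- Reduced asymmetric choice. -/
def PetriNet.RAC (N : PetriNet P T) : Prop :=
  N.plain ∧ ∀ p p', p ≠ p' → (N.postset p ∩ N.postset p').Nonempty →
    ((N.postset p).ncard = 1 ∧ (N.postset p').ncard ≤ 2 ∧
      N.presetSet (N.postset p') = {p, p'}) ∨
    ((N.postset p').ncard = 1 ∧ (N.postset p).ncard ≤ 2 ∧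
      N.presetSet (N.postset p) = {p, p'})

/-- A region `(R,B,F)` of the LTS given by `tr`. -/
def IsRegion (tr : S → L → S → Prop) (R : S → ℕ) (B F : L → ℕ) : Prop :=
  ∀ s a s', tr s a s' → B a ≤ R s ∧ R s' = R s - B a + F a

end Defs

/-!
Firing `b` can disable `a` only by consuming tokens from an input place of `a`, so deactivation
forces the presets of `a` and `b` to meet. In a WPI net the presets are then comparable, so at every
marking where the transition with the larger preset is enabled, so is the other one. This rules out
one of the two witnesses of `a ∥ b`.
-/

namespace PetriNet

variable {P T : Type*} {N : PetriNet P T} {M : P → ℕ} {t t' : T}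

theorem reach.fire (hM : N.reach M) (ht : N.enables M t) : N.reach (N.fire M t) :=
  hM.tail ⟨t, ht, rfl⟩

theorem enables.of_wpt_le (ht' : N.enables M t') (h : ∀ p, N.Wpt p t ≤ N.Wpt p t') :
    N.enables M t :=
  fun p => (h p).trans (ht' p)

theorem enables.fire_of_disjoint_preset (ht : N.enables M t)
    (hdisj : Disjoint (N.preset t) (N.preset t')) : N.enables (N.fire M t') t := by
  intro p
  by_cases hp : p ∈ N.preset t
  · have hp' : N.Wpt p t' = 0 := Nat.eq_zero_of_not_pos (Set.disjoint_left.mp hdisj hp)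
    calc
      N.Wpt p t ≤ M p := ht p
      _ ≤ M p - N.Wpt p t' + N.Wtp t' p := by omega
  · exact (Nat.eq_zero_of_not_pos hp).trans_le (Nat.zero_le _)

theorem enables.preset_inter_nonempty (ht : N.enables M t)
    (hfire : ¬ N.enables (N.fire M t') t) : (N.preset t ∩ N.preset t').Nonempty :=
  Set.not_disjoint_iff_nonempty_inter.mp fun hdisj => hfire (ht.fire_of_disjoint_preset hdisj)

end PetriNet

namespace Solves

variable {S P T : Type*} {N : PetriNet P T} {tr : S → T → S → Prop} {s₀ : S} {t t' : T}

theorem exists_enab_iff_enables_and_fire_eq (hN : Solves N tr s₀) :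
    ∃ ζ : S → P → ℕ, (∀ s t, enab tr s t ↔ N.enables (ζ s) t) ∧
      ∀ s t s', tr s t s' → N.fire (ζ s) t = ζ s' := by
  obtain ⟨ζ, -, hreach, -, hstep⟩ := hN
  refine ⟨ζ, fun s t => ⟨?_, fun ht => ?_⟩, fun s t s' h => ((hstep s s' t).mp h).2⟩
  · rintro ⟨s', h⟩
    exact ((hstep s s' t).mp h).1
  · have hs : N.reach (ζ s) := (hreach _).mpr ⟨s, rfl⟩
    obtain ⟨s', hs'⟩ := (hreach _).mp (hs.fire ht)
    exact ⟨s', (hstep s s' t).mpr ⟨ht, hs'.symm⟩⟩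

theorem enab_of_wpt_le (hN : Solves N tr s₀) (h : ∀ p, N.Wpt p t ≤ N.Wpt p t') {s : S}
    (hs : enab tr s t') : enab tr s t := by
  obtain ⟨ζ, henab, -⟩ := hN.exists_enab_iff_enables_and_fire_eq
  exact (henab s t).mpr (((henab s t').mp hs).of_wpt_le h)

theorem preset_inter_nonempty_of_not_enab (hN : Solves N tr s₀) {s s' : S} (hs : enab tr s t)
    (hstep : tr s t' s') (hs' : ¬ enab tr s' t) : (N.preset t ∩ N.preset t').Nonempty := by
  obtain ⟨ζ, henab, hfire⟩ := hN.exists_enab_iff_enables_and_fire_eq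
  rw [henab] at hs hs'
  rw [← hfire s t' s' hstep] at hs'
  exact hs.preset_inter_nonempty hs'

theorem preset_inter_nonempty_of_ldeact (hN : Solves N tr s₀) (h : ldeact tr t t') :
    (N.preset t ∩ N.preset t').Nonempty := by
  obtain ⟨s, s', ⟨hs, hstep, hs'⟩ | ⟨hs, hstep, hs'⟩⟩ := h
  · exact hN.preset_inter_nonempty_of_not_enab hs hstep hs'
  · rw [Set.inter_comm]
    exact hN.preset_inter_nonempty_of_not_enab hs hstep hs'

end Solves

theorem case1_no_wpi_solution_general {S L P : Type*} (tr : S → L → S → Prop) (s₀ : S)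
    (a b : L) (hinter : linter tr a b) (hdeact : ldeact tr a b)
    (N : PetriNet P L) (hW : N.WPI) : ¬ Solves N tr s₀ := by
  intro hN
  obtain ⟨⟨s, hsa, hsb⟩, ⟨u, hub, hua⟩⟩ := hinter
  rcases hW a b (hN.preset_inter_nonempty_of_ldeact hdeact) with hab | hba
  · exact hua (hN.enab_of_wpt_le hab hub)
  · exact hsb (hN.enab_of_wpt_le hba hsa)

/-- Case 1: If the LTS is finite, reachable and deterministic and
`a ∥ b` together with `a ⊲⊳ b` hold, then no WPI Petri net solves the LTS. -/
theorem case1_no_wpi_solution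
    {S L : Type*} [Fintype S] [Fintype L] (tr : S → L → S → Prop) (s₀ : S)
    (hdet : Deterministic tr) (hreach : ReachableLTS tr s₀)
    (a b : L) (h1 : linter tr a b) (h2 : ldeact tr a b) :
    ∀ (P : Type) [Finite P] (N : PetriNet P L), N.WPI → ¬ Solves N tr s₀ :=
  fun _ _ N hW => case1_no_wpi_solution_general tr s₀ a b h1 h2 N hW
end

section
/- Let N=(P,T,W,M₀) be a block-reduced asymmetric choice (BRAC) Petri net and let a,b∈T be transitions with ∅≠•a and •a⊊•b (proper inclusion of presets). Then there exist distinct places p,q∈P with •a={p} and •b={p,q}. Consequently, in a BRAC net there are no transitions a,b,c with ∅≠•a⊊•b⊊•c, and whenever •a⊊•b and •c⊊•b with •a,•c nonempty, then •a=•c. -/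
/-!
Suppose `•a` and `•b` share a place `p`, and let `q ∈ •b \ •a`. The postsets of `p` and `q` meet in
`b`, while `a` lies in `p^•` but not in `q^•`. The block condition on `p` and `q` can then only hold
with `q^• = T₁` and `p^• = T₁ ∪ T₂`, where `b ∈ T₁` and `a ∈ T₂`; hence `•a ⊆ •T₂ = {p}` and
`•b ⊆ •T₁ = {p, q}`. In a chain the middle preset would be both a singleton and a pair. Since
moreover `q^• ⊆ p^•`, a transition `c` with `q ∈ •c ⊆ •b` has `•c = •b`, so only `p` can form a
nonempty preset properly inside `•b`.
-/

namespace PetriNet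

variable {P T : Type*} {N : PetriNet P T} {p q : P} {a b c t : T}

/-- The block condition of a BRAC net, separated from plainness so that it makes sense for
arbitrary arc weights. It is the second component of `PetriNet.BRAC`, copied so as to be
definitionally equal to it. -/
def BlockReduced (N : PetriNet P T) : Prop :=
  ∀ p p', (N.postset p ∩ N.postset p').Nonempty →
    N.postset p = N.postset p' ∨
    ∃ T1 T2 : Set T,
      (N.postset p = T1 ∧ N.postset p' = T1 ∪ T2 ∧
        N.presetSet T1 = {p, p'} ∧ N.presetSet T2 = {p'}) ∨
      (N.postset p' = T1 ∧ N.postset p = T1 ∪ T2 ∧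
        N.presetSet T1 = {p, p'} ∧ N.presetSet T2 = {p})

theorem BRAC.blockReduced (h : N.BRAC) : N.BlockReduced := h.2

theorem mem_postset_iff_mem_preset : t ∈ N.postset p ↔ p ∈ N.preset t := Iff.rfl

theorem preset_subset_presetSet {U : Set T} (ht : t ∈ U) : N.preset t ⊆ N.presetSet U :=
  fun _ hp => ⟨t, ht, hp⟩

namespace BlockReduced

theorem exists_postset_eq_union (hN : N.BlockReduced)
    (hpq : (N.postset p ∩ N.postset q).Nonempty) (hsub : ¬ N.postset p ⊆ N.postset q) :
    ∃ U : Set T, N.postset p = N.postset q ∪ U ∧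
      N.presetSet (N.postset q) = {p, q} ∧ N.presetSet U = {p} := by
  rcases hN p q hpq with heq | ⟨_, U, ⟨rfl, hq, -, -⟩ | ⟨rfl, hp, hpair, hU⟩⟩
  · exact absurd heq.subset hsub
  · exact absurd (hq ▸ Set.subset_union_left) hsub
  · exact ⟨U, hp, hpair, hU⟩

theorem postset_subset_postset (hN : N.BlockReduced)
    (hpq : (N.postset p ∩ N.postset q).Nonempty) (hsub : ¬ N.postset p ⊆ N.postset q) :
    N.postset q ⊆ N.postset p := by
  obtain ⟨U, hp, -, -⟩ := hN.exists_postset_eq_union hpq hsub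
  exact hp ▸ Set.subset_union_left

theorem preset_eq_singleton (hN : N.BlockReduced)
    (hpq : (N.postset p ∩ N.postset q).Nonempty) (hp : p ∈ N.preset t) (hq : q ∉ N.preset t) :
    N.preset t = {p} := by
  obtain ⟨U, hunion, -, hU⟩ := hN.exists_postset_eq_union hpq fun hsub => hq (hsub hp)
  have htU : t ∈ U :=
    (hunion ▸ mem_postset_iff_mem_preset.mpr hp : t ∈ N.postset q ∪ U).resolve_left hq
  exact (hU ▸ preset_subset_presetSet htU).antisymm (Set.singleton_subset_iff.mpr hp)

theorem preset_eq_pair (hN : N.BlockReduced) (hsub : ¬ N.postset p ⊆ N.postset q)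
    (hp : p ∈ N.preset t) (hq : q ∈ N.preset t) : N.preset t = {p, q} := by
  obtain ⟨-, -, hpair, -⟩ := hN.exists_postset_eq_union ⟨t, hp, hq⟩ hsub
  exact (hpair ▸ preset_subset_presetSet (mem_postset_iff_mem_preset.mpr hq)).antisymm
    (Set.pair_subset hp hq)

theorem exists_preset_eq_singleton_and_preset_eq_pair (hN : N.BlockReduced)
    (hab : (N.preset a ∩ N.preset b).Nonempty) (hsub : ¬ N.preset b ⊆ N.preset a) :
    ∃ p q : P, p ≠ q ∧ N.preset a = {p} ∧ N.preset b = {p, q} := by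
  obtain ⟨p, hpa, hpb⟩ := hab
  obtain ⟨q, hqb, hqa⟩ := Set.not_subset.mp hsub
  exact ⟨p, q, ne_of_mem_of_not_mem hpa hqa, hN.preset_eq_singleton ⟨b, hpb, hqb⟩ hpa hqa,
    hN.preset_eq_pair (fun hpq => hqa (hpq hpa)) hpb hqb⟩

theorem preset_subset_preset_of_ssubset (hN : N.BlockReduced)
    (hab : N.preset a ⊂ N.preset b) (hcb : (N.preset c ∩ N.preset b).Nonempty) :
    N.preset a ⊆ N.preset c := by
  by_contra hac
  obtain ⟨q, hqa, hqc⟩ := Set.not_subset.mp hac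
  obtain ⟨r, hrc, hrb⟩ := hcb
  have hqb : q ∈ N.preset b := hab.subset hqa
  have hsub : ¬ N.postset r ⊆ N.postset q := fun hrq => hqc (hrq hrc)
  have hra : r ∈ N.preset a := hN.postset_subset_postset ⟨b, hrb, hqb⟩ hsub hqa
  exact hab.not_subset (hN.preset_eq_pair hsub hrb hqb ▸ Set.pair_subset hra hqa)

end BlockReduced

end PetriNet

theorem brac_proper_inclusion_structure_general {P T : Type*} (N : PetriNet P T)
    (hN : N.BlockReduced) :
    (∀ a b : T, N.preset a ≠ ∅ → N.preset a ⊂ N.preset b →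
      ∃ p q : P, p ≠ q ∧ N.preset a = {p} ∧ N.preset b = {p, q}) ∧
    (¬ ∃ a b c : T, N.preset a ≠ ∅ ∧ N.preset a ⊂ N.preset b ∧
        N.preset b ⊂ N.preset c) ∧
    (∀ a b c : T, N.preset a ≠ ∅ → N.preset c ≠ ∅ →
      N.preset a ⊂ N.preset b → N.preset c ⊂ N.preset b →
      N.preset a = N.preset c) := by
  have inter_nonempty {s t : Set P} (hs : s ≠ ∅) (hst : s ⊂ t) : (s ∩ t).Nonempty := by
    rwa [Set.inter_eq_left.mpr hst.subset, Set.nonempty_iff_ne_empty]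
  have structure_of_ssubset (a b : T) (ha : N.preset a ≠ ∅) (hab : N.preset a ⊂ N.preset b) :
      ∃ p q : P, p ≠ q ∧ N.preset a = {p} ∧ N.preset b = {p, q} :=
    hN.exists_preset_eq_singleton_and_preset_eq_pair (inter_nonempty ha hab) hab.not_subset
  refine ⟨structure_of_ssubset, ?_, fun a b c ha hc hab hcb => ?_⟩
  · rintro ⟨a, b, c, ha, hab, hbc⟩
    obtain ⟨p, q, hpq, -, hb_pair⟩ := structure_of_ssubset a b ha hab
    have hb : N.preset b ≠ ∅ := hb_pair ▸ (Set.insert_nonempty p {q}).ne_empty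
    obtain ⟨r, -, -, hb_singleton, -⟩ := structure_of_ssubset b c hb hbc
    exact Set.not_nontrivial_singleton (hb_singleton ▸ hb_pair ▸ Set.nontrivial_pair hpq)
  · exact (hN.preset_subset_preset_of_ssubset hab (inter_nonempty hc hcb)).antisymm
      (hN.preset_subset_preset_of_ssubset hcb (inter_nonempty ha hab))

/-- In a BRAC net, a proper inclusion `∅ ≠ •a ⊊ •b` forces
`•a = {p}` and `•b = {p,q}` for distinct places `p,q`; hence there are no chains
`∅ ≠ •a ⊊ •b ⊊ •c`, and two proper inclusions into the same `•b` coincide. -/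
theorem brac_proper_inclusion_structure
    {P T : Type*} [Fintype P] [Fintype T]
    (N : PetriNet P T) (h : N.BRAC) :
    (∀ a b : T, N.preset a ≠ ∅ → N.preset a ⊂ N.preset b →
      ∃ p q : P, p ≠ q ∧ N.preset a = {p} ∧ N.preset b = {p, q}) ∧
    (¬ ∃ a b c : T, N.preset a ≠ ∅ ∧ N.preset a ⊂ N.preset b ∧
        N.preset b ⊂ N.preset c) ∧
    (∀ a b c : T, N.preset a ≠ ∅ → N.preset c ≠ ∅ →
      N.preset a ⊂ N.preset b → N.preset c ⊂ N.preset b →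
      N.preset a = N.preset c) :=
  brac_proper_inclusion_structure_general N h.blockReduced
end
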